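/- Assume (H₁)–(H₄) and (H₅') hold and L < 1, where L := (2·l_K²/η_G²)(l_G·√(4l_G²+2η_G²) + 2l_G² + η_G²). Then the NFDQVI has a unique solution: there exists exactly one pair (x,u) ∈ C(I,H₁) × C(I,Ω) such that x(s) = x₀ + ψ(x) + (1/Γ(q))·∫₀^s (s−ζ)^{q−1}[f(ζ,x(ζ)) + g(ζ,x(ζ),u(ζ))] dζ for all s ∈ I, and for every s ∈ I, u(s) ∈ K(u(s)) and ⟨G(s,x(s),u(s)), v − u(s)⟩ ≥ 0 for all v ∈ K(u(s)). -/

import Mathlib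

open scoped RealInnerProductSpace
open Set

/-- Metric projection onto a set `C` of a real Hilbert space, characterized by the
variational inequality `⟪w - x, v - w⟫ ≥ 0` for all `v ∈ C`. -/
noncomputable def proj {H : Type*} [NormedAddCommGroup H] [InnerProductSpace ℝ H]
    (C : Set H) (x : H) : H :=
  letI : Nonempty H := ⟨0⟩
  Classical.epsilon fun w => w ∈ C ∧ ∀ v ∈ C, 0 ≤ ⟪w - x, v - w⟫

/-- The constant `L = (2 l_K²/η_G²)(l_G √(4l_G²+2η_G²) + 2l_G² + η_G²)`. -/
noncomputable def Lconst (lK lG ηG : ℝ) : ℝ :=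
  2 * lK ^ 2 / ηG ^ 2 * (lG * Real.sqrt (4 * lG ^ 2 + 2 * ηG ^ 2) + 2 * lG ^ 2 + ηG ^ 2)

/-- The constant `κ = 2 l_G (√(l_G²+η_G²/2)+l_G)² / (η_G² √(l_G²+η_G²/2))`. -/
noncomputable def kconst (lG ηG : ℝ) : ℝ :=
  2 * lG * (Real.sqrt (lG ^ 2 + ηG ^ 2 / 2) + lG) ^ 2 /
    (ηG ^ 2 * Real.sqrt (lG ^ 2 + ηG ^ 2 / 2))

/-- The constant `ξ = l_g (1 + √(κ/(1-L)))`. -/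
noncomputable def xiconst (lg lK lG ηG : ℝ) : ℝ :=
  lg * (1 + Real.sqrt (kconst lG ηG / (1 - Lconst lK lG ηG)))

/-- `(x, u)` is a solution of the nonlocal fractional differential quasi-variational
inequality (NFDQVI), in the integrated sense of Definition 2.4 of the paper. -/
def IsNFDQVISol {H₁ H₂ : Type*} [NormedAddCommGroup H₁] [InnerProductSpace ℝ H₁]
    [NormedAddCommGroup H₂] [InnerProductSpace ℝ H₂]
    (T q : ℝ) (x₀ : H₁) (ψ : (ℝ → H₁) → H₁) (f : ℝ → H₁ → H₁)
    (g : ℝ → H₁ → H₂ → H₁) (G : ℝ → H₁ → H₂ → H₂) (Ω : Set H₂) (K : H₂ → Set H₂)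
    (x : ℝ → H₁) (u : ℝ → H₂) : Prop :=
  ContinuousOn x (Icc 0 T) ∧ ContinuousOn u (Icc 0 T) ∧
  (∀ s ∈ Icc (0:ℝ) T, u s ∈ Ω) ∧
  (∀ s ∈ Icc (0:ℝ) T,
    x s = x₀ + ψ x + (Real.Gamma q)⁻¹ •
      ∫ ζ in (0:ℝ)..s, ((s - ζ) ^ (q - 1)) • (f ζ (x ζ) + g ζ (x ζ) (u ζ))) ∧
  (∀ s ∈ Icc (0:ℝ) T, u s ∈ K (u s) ∧
    ∀ v ∈ K (u s), 0 ≤ ⟪G s (x s) (u s), v - u s⟫)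

/-!
The inequality and the equation decouple. For frozen time `s` and state `x` the quasi-variational
inequality has exactly one solution `U s x`, and `U` is Lipschitz with the constant
`√(κ / (1 - L))`; the equation then becomes a Volterra equation for `x` alone, whose right-hand
side contracts a weighted sup norm.

*Frozen problem.* For fixed `z ∈ Ω` the variational inequality over `K z` is solvable
(`vi_exists`): by strong pseudomonotonicity the bounded closed convex sets
`{u ∈ C | ⟪F v, v - u⟫ ≥ η ‖v - u‖²}`, `v ∈ C`, satisfy the Knaster–Kuratowski–Mazurkiewicz
condition. Since they are convex, Berge's intersection theorem (an induction on separating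
hyperplanes, `berge_inter`) replaces Brouwer's theorem for finite subfamilies, and least-norm points
(`exists_mem_forall_of_finite`) pass to the whole family; Minty's argument concludes. If `u₁, u₂`
solve the inequalities over `K z₁, K z₂` with data `(s₁, x₁), (s₂, x₂)`, then (`vi_stability`)
`‖u₂ - u₁‖ ≤ l_K (1 + l_G/η_G) ‖z₂ - z₁‖ + (l_G/η_G) (|s₂ - s₁| + ‖x₂ - x₁‖)`.
Since `L < 1` forces `l_K (1 + l_G/η_G) < 1`, the map `z ↦ u` is a contraction of `Ω` whose fixed
point is `U s x`, with Lipschitz constant `(l_G/η_G) / (1 - l_K (1 + l_G/η_G)) ≤ √(κ / (1 - L))`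
(`const_bounds`, `qvi_solution_map`).

*Equation.* `x ↦ f s x + g s x (U s x)` is `(l_f + ξ)`-Lipschitz, so the smallness condition is
precisely the contraction condition for the norm `sup e ^ (-γ s) ‖x s‖` (`volterra_unique`).
-/

/-! ### Intersections of convex sets -/

/-- Berge's intersection theorem: if closed convex sets cover a compact convex set `X`, and every
subfamily that omits one of them has a common point in `X`, then so has the whole family. -/
lemma berge_inter {E ι : Type*} [NormedAddCommGroup E] [InnerProductSpace ℝ E] [DecidableEq ι]
    (S : ι → Set E) (hcl : ∀ i, IsClosed (S i)) (hcv : ∀ i, Convex ℝ (S i)) (s : Finset ι) :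
    s.Nonempty → ∀ X : Set E, IsCompact X → Convex ℝ X → (∀ x ∈ X, ∃ i ∈ s, x ∈ S i) →
      (∀ k ∈ s, ∃ x ∈ X, ∀ j ∈ s.erase k, x ∈ S j) → ∃ x ∈ X, ∀ j ∈ s, x ∈ S j := by
  intro hs
  induction hs using Finset.Nonempty.cons_induction with
  | singleton a =>
    intro X _ _ hcov hk
    obtain ⟨x, hx, -⟩ := hk a (by simp)
    obtain ⟨i, hi, hxi⟩ := hcov x hx
    exact ⟨x, hx, fun j hj => by simp_all⟩
  | cons a s ha hs ih =>
    intro X hX hXc hcov hk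
    by_contra hno
    push Not at hno
    simp only [Finset.mem_cons] at hno hcov hk
    have hBcl : IsClosed (⋂ j ∈ s, S j) := isClosed_biInter fun i _ => hcl i
    have hBcv : Convex ℝ (⋂ j ∈ s, S j) := convex_iInter₂ fun i _ => hcv i
    have hdisj : Disjoint (X ∩ S a) (X ∩ ⋂ j ∈ s, S j) := by
      rw [Set.disjoint_left]
      rintro x ⟨hx, hxa⟩ ⟨-, hxs⟩
      obtain ⟨j, hj, hxj⟩ := hno x hx
      rcases hj with rfl | hj
      · exact hxj hxa
      · exact hxj (Set.mem_iInter₂.1 hxs j hj)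
    obtain ⟨l, u, v, hlu, huv, hvl⟩ := geometric_hahn_banach_compact_closed
      (hXc.inter (hcv a)) (hX.inter_right (hcl a)) (hXc.inter hBcv)
      (hX.isClosed.inter hBcl) hdisj
    -- The separating hyperplane misses `S a`, so the remaining sets cover its trace on `X`.
    have hHcl : IsClosed {x : E | l x = u} := isClosed_eq l.continuous continuous_const
    have hHcv : Convex ℝ {x : E | l x = u} := convex_hyperplane l.isLinear u
    obtain ⟨x, ⟨hxX, hxu⟩, hxs⟩ := ih (X ∩ {x | l x = u}) (hX.inter_right hHcl)
      (hXc.inter hHcv) (by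
        rintro x ⟨hx, hxu⟩
        obtain ⟨i, hi, hxi⟩ := hcov x hx
        rcases hi with rfl | hi
        · exact absurd hxu (hlu x ⟨hx, hxi⟩).ne
        · exact ⟨i, hi, hxi⟩) (by
        intro k hks
        have hka : a ≠ k := fun h => ha (h ▸ hks)
        obtain ⟨y, hyX, hy⟩ := hk k (Or.inr hks)
        obtain ⟨z, hzX, hz⟩ := hk a (Or.inl rfl)
        have hyu : l y < u := hlu y ⟨hyX, hy a (by simp [hka])⟩
        have hzu : u < l z := huv.trans (hvl z ⟨hzX, Set.mem_iInter₂.2 fun j hj =>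
          hz j (by simp [hj, show j ≠ a from fun h => ha (h ▸ hj)])⟩)
        have hconv : Convex ℝ (X ∩ ⋂ j ∈ s.erase k, S j) :=
          hXc.inter (convex_iInter₂ fun i _ => hcv i)
        have hyD : y ∈ X ∩ ⋂ j ∈ s.erase k, S j := ⟨hyX, Set.mem_iInter₂.2 fun j hj =>
          hy j (by simp only [Finset.mem_erase, Finset.mem_cons] at hj ⊢; tauto)⟩
        have hzD : z ∈ X ∩ ⋂ j ∈ s.erase k, S j := ⟨hzX, Set.mem_iInter₂.2 fun j hj =>
          hz j (by
            simp only [Finset.mem_erase, Finset.mem_cons] at hj ⊢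
            exact ⟨fun h => ha (h ▸ hj.2), Or.inr hj.2⟩)⟩
        obtain ⟨w, hw, hwu⟩ := hconv.isPreconnected.intermediate_value hyD hzD
          l.continuous.continuousOn ⟨hyu.le, hzu.le⟩
        exact ⟨w, ⟨hw.1, hwu⟩, fun j hj => Set.mem_iInter₂.1 hw.2 j hj⟩)
    have := hvl x ⟨hxX, Set.mem_iInter₂.2 hxs⟩
    simp only [Set.mem_ofPred_eq] at hxu
    linarith

/-- The Knaster–Kuratowski–Mazurkiewicz principle for closed convex sets; convexity makes
Brouwer's theorem unnecessary. -/
lemma kkm_convex {E : Type*} [NormedAddCommGroup E] [InnerProductSpace ℝ E]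
    (S : E → Set E) (hcl : ∀ i, IsClosed (S i)) (hcv : ∀ i, Convex ℝ (S i)) (C : Set E)
    (hkkm : ∀ t : Finset E, ↑t ⊆ C → ∀ x ∈ convexHull ℝ (t : Set E), ∃ v ∈ t, x ∈ S v)
    (s : Finset E) (hs : s.Nonempty) (hsC : ↑s ⊆ C) :
    ∃ x ∈ convexHull ℝ (s : Set E), ∀ v ∈ s, x ∈ S v := by
  classical
  induction s using Finset.strongInduction with
  | H s ih =>
    refine berge_inter S hcl hcv s hs _ (s.finite_toSet.isCompact_convexHull (𝕜 := ℝ))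
      (convex_convexHull ℝ _) (hkkm s hsC) fun k hk => ?_
    rcases (s.erase k).eq_empty_or_nonempty with he | hne
    · exact ⟨k, subset_convexHull ℝ _ hk, by simp [he]⟩
    · obtain ⟨x, hx, hxs⟩ := ih _ (Finset.erase_ssubset hk) hne
        (fun y hy => hsC (Finset.mem_of_mem_erase hy))
      exact ⟨x, convexHull_mono (by simp) hx, hxs⟩

/-! ### Metric projections and variational inequalities -/

/-- Existence of the metric projection, in variational form. -/
lemma proj_spec {H : Type*} [NormedAddCommGroup H] [InnerProductSpace ℝ H] [CompleteSpace H]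
    {C : Set H} (hne : C.Nonempty) (hcl : IsClosed C) (hcv : Convex ℝ C) (x : H) :
    proj C x ∈ C ∧ ∀ v ∈ C, 0 ≤ ⟪proj C x - x, v - proj C x⟫ := by
  have hex : ∃ w, w ∈ C ∧ ∀ v ∈ C, 0 ≤ ⟪w - x, v - w⟫ := by
    obtain ⟨w, hw, hwx⟩ := exists_norm_eq_iInf_of_complete_convex hne hcl.isComplete hcv x
    refine ⟨w, hw, fun v hv => ?_⟩
    have := (norm_eq_iInf_iff_real_inner_le_zero hcv hw).1 hwx v hv
    rw [← neg_sub x w, inner_neg_left]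
    linarith
  exact Classical.epsilon_spec hex

lemma proj_eq {H : Type*} [NormedAddCommGroup H] [InnerProductSpace ℝ H] [CompleteSpace H]
    {C : Set H} (hcl : IsClosed C) (hcv : Convex ℝ C) {x w : H} (hw : w ∈ C)
    (h : ∀ v ∈ C, 0 ≤ ⟪w - x, v - w⟫) : proj C x = w := by
  obtain ⟨h1, h2⟩ := proj_spec ⟨w, hw⟩ hcl hcv x
  have a := h2 w hw
  have b := h _ h1
  have e : ⟪proj C x - x, w - proj C x⟫ + ⟪w - x, proj C x - w⟫ = - ‖proj C x - w‖ ^ 2 := by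
    rw [← real_inner_self_eq_norm_sq, ← neg_sub (proj C x) w, inner_neg_right,
      show proj C x - x = (proj C x - w) + (w - x) by abel, inner_add_left]
    ring
  have : ‖proj C x - w‖ = 0 := by nlinarith [norm_nonneg (proj C x - w)]
  exact sub_eq_zero.1 (norm_eq_zero.1 this)

/-- Weak compactness of bounded closed convex sets: such a family has a common point as soon as
its finite subfamilies do. The points of least norm of the finite intersections form a Cauchy
net. -/
lemma exists_mem_forall_of_finite {H ι : Type*} [NormedAddCommGroup H] [InnerProductSpace ℝ H]
    [CompleteSpace H] (S : ι → Set H) (hcl : ∀ i, IsClosed (S i)) (hcv : ∀ i, Convex ℝ (S i))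
    (i₀ : ι) (B : ℝ) (hB : ∀ x ∈ S i₀, ‖x‖ ≤ B)
    (hfin : ∀ s : Finset ι, ∃ x, ∀ i ∈ s, x ∈ S i) : ∃ x, ∀ i, x ∈ S i := by
  classical
  let D : Finset ι → Set H := fun s => ⋂ i ∈ insert i₀ s, S i
  have hDcl : ∀ s, IsClosed (D s) := fun s => isClosed_biInter fun i _ => hcl i
  have hDcv : ∀ s, Convex ℝ (D s) := fun s => convex_iInter₂ fun i _ => hcv i
  have hDne : ∀ s, (D s).Nonempty := fun s => by
    obtain ⟨x, hx⟩ := hfin (insert i₀ s)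
    exact ⟨x, Set.mem_iInter₂.2 hx⟩
  let p : Finset ι → H := fun s => proj (D s) 0
  have hp : ∀ s, p s ∈ D s ∧ ∀ v ∈ D s, 0 ≤ ⟪p s - 0, v - p s⟫ := fun s =>
    proj_spec (hDne s) (hDcl s) (hDcv s) 0
  have hmem : ∀ {s t : Finset ι}, s ≤ t → p t ∈ D s := fun {s t} hst =>
    Set.mem_iInter₂.2 fun i hi => Set.mem_iInter₂.1 (hp t).1 i (Finset.insert_subset_insert _ hst hi)
  have hkey : ∀ {s t : Finset ι}, s ≤ t → ‖p t - p s‖ ^ 2 ≤ ‖p t‖ ^ 2 - ‖p s‖ ^ 2 := by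
    intro s t hst
    have h := (hp s).2 _ (hmem hst)
    rw [sub_zero, inner_sub_right, real_inner_self_eq_norm_sq, real_inner_comm] at h
    rw [norm_sub_sq_real]
    linarith
  have hbd : BddAbove (Set.range fun s => ‖p s‖ ^ 2) := by
    refine ⟨B ^ 2, ?_⟩
    rintro _ ⟨s, rfl⟩
    have := hB _ (Set.mem_iInter₂.1 (hp s).1 i₀ (by simp))
    have h0 := norm_nonneg (p s)
    simp only
    gcongr
  have hmono : Monotone fun s => ‖p s‖ ^ 2 := fun s t hst => by
    have := hkey hst
    simp only
    nlinarith [sq_nonneg ‖p t - p s‖]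
  have hc : CauchySeq p := by
    have hcr := (tendsto_atTop_ciSup hmono hbd).cauchySeq
    rw [Metric.cauchySeq_iff'] at hcr ⊢
    intro ε hε
    obtain ⟨N, hN⟩ := hcr (ε ^ 2) (by positivity)
    refine ⟨N, fun n hn => ?_⟩
    have h1 := hN n hn
    rw [Real.dist_eq] at h1
    rw [dist_eq_norm]
    have h2 := (hkey (show N ≤ n from hn)).trans_lt ((le_abs_self _).trans_lt h1)
    exact lt_of_pow_lt_pow_left₀ 2 hε.le h2
  obtain ⟨x, hx⟩ := cauchySeq_tendsto_of_complete hc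
  refine ⟨x, fun i => (hcl i).mem_of_tendsto hx ?_⟩
  filter_upwards [Filter.eventually_ge_atTop {i}] with t ht
  exact Set.mem_iInter₂.1 (hp t).1 i (Finset.mem_insert_of_mem (ht (by simp)))

/-- Solvability of the variational inequality for a Lipschitz, strongly pseudomonotone operator
on a closed convex set. -/
lemma vi_exists {H : Type*} [NormedAddCommGroup H] [InnerProductSpace ℝ H] [CompleteSpace H]
    {C : Set H} (hne : C.Nonempty) (hcl : IsClosed C) (hcv : Convex ℝ C) (F : H → H)
    (a η : ℝ) (hη : 0 < η)
    (hLip : ∀ u₁ ∈ C, ∀ u₂ ∈ C, ‖F u₂ - F u₁‖ ≤ a * ‖u₂ - u₁‖)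
    (hpm : ∀ u₁ ∈ C, ∀ u₂ ∈ C, 0 ≤ ⟪F u₂, u₁ - u₂⟫ → η * ‖u₁ - u₂‖ ^ 2 ≤ ⟪F u₁, u₁ - u₂⟫) :
    ∃ u ∈ C, ∀ v ∈ C, 0 ≤ ⟪F u, v - u⟫ := by
  let S : H → Set H := fun v => C ∩ {u | η * ‖v - u‖ ^ 2 - ⟪F v, v - u⟫ ≤ 0}
  have hScl : ∀ v, IsClosed (S v) := fun v =>
    hcl.inter (isClosed_le (by fun_prop) continuous_const)
  have hScv : ∀ v, Convex ℝ (S v) := fun v => by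
    have h1 : ConvexOn ℝ univ fun u : H => ‖v - u‖ := by
      simpa [dist_eq_norm, norm_sub_rev] using convexOn_univ_dist (E := H) v
    have h2 : ConvexOn ℝ univ fun u : H => η * ‖v - u‖ ^ 2 :=
      (h1.pow (fun _ _ => norm_nonneg _) 2).smul hη.le
    have h3 : ConvexOn ℝ univ fun u : H => η * ‖v - u‖ ^ 2 - ⟪F v, v - u⟫ := by
      refine h2.sub ⟨convex_univ, fun x _ y _ α β _ _ hαβ => ?_⟩
      have : v - (α • x + β • y) = α • (v - x) + β • (v - y) := by
        have : v = α • v + β • v := by rw [← add_smul, hαβ, one_smul]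
        rw [smul_sub, smul_sub]
        nth_rewrite 1 [this]
        abel
      simp only [this, inner_add_right, inner_smul_right, smul_eq_mul]
      exact le_rfl
    convert hcv.inter (h3.convex_le 0) using 2
    simp
  have hkkm : ∀ t : Finset H, ↑t ⊆ C → ∀ x ∈ convexHull ℝ (t : Set H), ∃ v ∈ t, x ∈ S v := by
    intro t ht x hx
    by_contra! hno
    have hxC : x ∈ C := convexHull_min ht hcv hx
    -- If `x` lay in no `S v`, all of `t`, hence `x`, would lie in an open half-space bounded at `x`.
    have hsub : (t : Set H) ⊆ {y | ⟪F x, y⟫ < ⟪F x, x⟫} := by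
      intro v hv
      have h1 := hno v hv
      by_contra h2
      refine h1 ⟨hxC, ?_⟩
      have := hpm v (ht hv) x hxC (by
        simp only [Set.mem_ofPred_eq, not_lt] at h2
        rw [inner_sub_right]; linarith)
      simp only [Set.mem_ofPred_eq]; linarith
    have hh : Convex ℝ {y | ⟪F x, y⟫ < ⟪F x, x⟫} :=
      convex_halfSpace_lt (innerSL ℝ (F x)).isLinear _
    exact lt_irrefl ⟪F x, x⟫ (convexHull_min hsub hh hx)
  obtain ⟨v₀, hv₀⟩ := hne
  obtain ⟨u, hu⟩ := exists_mem_forall_of_finite (fun v : C => S v) (fun v => hScl v)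
    (fun v => hScv v) ⟨v₀, hv₀⟩ (‖v₀‖ + ‖F v₀‖ / η) (by
      rintro x ⟨-, hx⟩
      simp only [Set.mem_ofPred_eq] at hx
      have h1 := real_inner_le_norm (F v₀) (v₀ - x)
      have h2 : ‖x‖ ≤ ‖v₀‖ + ‖v₀ - x‖ := by
        have := norm_sub_le v₀ (v₀ - x); simpa using this
      have h3 : ‖v₀ - x‖ ≤ ‖F v₀‖ / η := by
        rw [le_div_iff₀ hη]
        rcases (norm_nonneg (v₀ - x)).eq_or_lt with h | h
        · rw [← h]; simp
        · nlinarith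
      linarith) (by
      classical
      intro s
      rcases s.eq_empty_or_nonempty with rfl | hs
      · exact ⟨0, by simp⟩
      obtain ⟨x, -, hx⟩ := kkm_convex S hScl hScv C hkkm (s.image Subtype.val) (hs.image _)
        (by intro y hy; simp only [Finset.coe_image, Set.mem_image] at hy
            obtain ⟨z, -, rfl⟩ := hy; exact z.2)
      exact ⟨x, fun i hi => hx _ (Finset.mem_image_of_mem _ hi)⟩)
  have huC : u ∈ C := (hu ⟨v₀, hv₀⟩).1
  refine ⟨u, huC, fun v hv => ?_⟩
  -- Minty's argument: test at `u + t (v - u)` and let `t` tend to `0`.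
  have hkey : ∀ t : ℝ, 0 < t → t ≤ 1 → 0 ≤ ⟪F u, v - u⟫ + t * (a * ‖v - u‖ ^ 2) := by
    intro t ht ht1
    have hw : u + t • (v - u) ∈ C := hcv.add_smul_sub_mem huC hv ⟨ht.le, ht1⟩
    have h1 := (hu ⟨_, hw⟩).2
    simp only [Set.mem_ofPred_eq, add_sub_cancel_left, inner_smul_right] at h1
    have h2 := hLip u huC _ hw
    rw [add_sub_cancel_left, norm_smul, Real.norm_eq_abs, abs_of_pos ht] at h2
    have h3 := real_inner_le_norm (F (u + t • (v - u)) - F u) (v - u)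
    rw [inner_sub_left] at h3
    have h4 : 0 ≤ t * ⟪F (u + t • (v - u)), v - u⟫ := by
      nlinarith [sq_nonneg ‖t • (v - u)‖]
    have h5 := nonneg_of_mul_nonneg_right h4 ht
    nlinarith [mul_le_mul_of_nonneg_right h2 (norm_nonneg (v - u))]
  have hlim : Filter.Tendsto (fun t : ℝ => ⟪F u, v - u⟫ + t * (a * ‖v - u‖ ^ 2))
      (nhdsWithin 0 (Ioi 0)) (nhds (⟪F u, v - u⟫ + 0 * (a * ‖v - u‖ ^ 2))) :=
    Filter.Tendsto.mono_left (Continuous.tendsto (by fun_prop) 0) nhdsWithin_le_nhds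
  rw [zero_mul, add_zero] at hlim
  refine ge_of_tendsto hlim ?_
  filter_upwards [Ioc_mem_nhdsGT (zero_lt_one' ℝ)] with t ht
  exact hkey t ht.1 ht.2

/-- Stability of solutions of variational inequalities on moving sets, in terms of a single
projection bound `r` between the sets and the distance `δ` of the data. Comparing with the
projection of `u₁ - ρ F₁ u₁` onto the second set and letting `ρ → ∞` gives the constants. -/
lemma vi_stability {H : Type*} [NormedAddCommGroup H] [InnerProductSpace ℝ H] [CompleteSpace H]
    {C₁ C₂ : Set H} (hcl₁ : IsClosed C₁) (hcv₁ : Convex ℝ C₁) (hcl₂ : IsClosed C₂)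
    (hcv₂ : Convex ℝ C₂) (F₁ F₂ : H → H) (a η r δ : ℝ) (ha : 0 ≤ a) (hη : 0 < η)
    (hproj : ∀ x, ‖proj C₂ x - proj C₁ x‖ ≤ r) {u₁ u₂ : H} (hu₁ : u₁ ∈ C₁) (hu₂ : u₂ ∈ C₂)
    (hF : ∀ w ∈ C₂, ‖F₂ w - F₁ u₁‖ ≤ a * (δ + ‖w - u₁‖))
    (hpm : ∀ w ∈ C₂, 0 ≤ ⟪F₂ u₂, w - u₂⟫ → η * ‖w - u₂‖ ^ 2 ≤ ⟪F₂ w, w - u₂⟫)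
    (hs₁ : ∀ v ∈ C₁, 0 ≤ ⟪F₁ u₁, v - u₁⟫) (hs₂ : ∀ v ∈ C₂, 0 ≤ ⟪F₂ u₂, v - u₂⟫) :
    ‖u₂ - u₁‖ ≤ r * (1 + a / η) + a / η * δ := by
  have hkey : ∀ ε : ℝ, 0 < ε → ‖u₂ - u₁‖ ≤ r * (1 + a / η) + a / η * δ + ε * (r / η) := by
    intro ε hε
    have hP1 : proj C₁ (u₁ - ε⁻¹ • F₁ u₁) = u₁ := proj_eq hcl₁ hcv₁ hu₁ fun v hv => by
      rw [sub_sub_cancel, inner_smul_left]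
      exact mul_nonneg (by simpa using hε.le) (hs₁ v hv)
    obtain ⟨hw, hwv⟩ := proj_spec ⟨u₂, hu₂⟩ hcl₂ hcv₂ (u₁ - ε⁻¹ • F₁ u₁)
    have hr := hproj (u₁ - ε⁻¹ • F₁ u₁)
    rw [hP1] at hr
    set w := proj C₂ (u₁ - ε⁻¹ • F₁ u₁) with hwdef
    have h1 := hpm w hw (hs₂ w hw)
    have h2 := hwv u₂ hu₂
    rw [show w - (u₁ - ε⁻¹ • F₁ u₁) = (w - u₁) + ε⁻¹ • F₁ u₁ by abel, inner_add_left,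
      inner_smul_left, ← neg_sub w u₂, inner_neg_right, inner_neg_right] at h2
    simp only [conj_trivial] at h2
    have h2' : ⟪F₁ u₁, w - u₂⟫ ≤ ε * -⟪w - u₁, w - u₂⟫ := by
      have := mul_le_mul_of_nonneg_left h2 hε.le
      rw [mul_zero] at this
      have e : ε * (-⟪w - u₁, w - u₂⟫ + ε⁻¹ * -⟪F₁ u₁, w - u₂⟫)
        = ε * -⟪w - u₁, w - u₂⟫ - ⟪F₁ u₁, w - u₂⟫ := by
        field_simp; ring
      linarith
    have h3 := real_inner_le_norm (F₂ w - F₁ u₁) (w - u₂)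
    rw [inner_sub_left] at h3
    have h4 := (abs_le.1 (abs_real_inner_le_norm (w - u₁) (w - u₂))).1
    have h5 := hF w hw
    have hp := norm_nonneg (w - u₂)
    have h6 : η * ‖w - u₂‖ ^ 2 ≤ (a * (δ + r) + ε * r) * ‖w - u₂‖ := by
      have i1 : ‖F₂ w - F₁ u₁‖ * ‖w - u₂‖ ≤ a * (δ + r) * ‖w - u₂‖ := by
        refine mul_le_mul_of_nonneg_right (h5.trans ?_) hp
        gcongr
      have i2 : ε * -⟪w - u₁, w - u₂⟫ ≤ ε * (r * ‖w - u₂‖) := by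
        refine mul_le_mul_of_nonneg_left ?_ hε.le
        have := mul_le_mul_of_nonneg_right hr hp
        linarith
      linarith
    have hδ : 0 ≤ a * (δ + r) + ε * r := by
      have : 0 ≤ a * (δ + ‖w - u₁‖) := (norm_nonneg _).trans h5
      have := mul_le_mul_of_nonneg_left hr ha
      have := mul_nonneg hε.le ((norm_nonneg _).trans hr)
      linarith
    have h7 : ‖w - u₂‖ ≤ (a * (δ + r) + ε * r) / η := by
      rw [le_div_iff₀ hη]
      rcases hp.eq_or_lt with h | h
      · rw [← h]; simpa using hδ
      · nlinarith
    have h8 : ‖u₂ - u₁‖ ≤ ‖w - u₁‖ + ‖w - u₂‖ := by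
      have := norm_sub_le (w - u₁) (w - u₂); simpa using this
    have e : r * (1 + a / η) + a / η * δ + ε * (r / η) = r + (a * (δ + r) + ε * r) / η := by
      field_simp; ring
    linarith
  have hlim : Filter.Tendsto (fun t : ℝ => r * (1 + a / η) + a / η * δ + t * (r / η))
      (nhdsWithin 0 (Ioi 0)) (nhds (r * (1 + a / η) + a / η * δ + 0 * (r / η))) :=
    Filter.Tendsto.mono_left (Continuous.tendsto (by fun_prop) 0) nhdsWithin_le_nhds
  rw [zero_mul, add_zero] at hlim
  refine ge_of_tendsto hlim ?_
  filter_upwards [self_mem_nhdsWithin] with t ht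
  exact hkey t ht

/-- `L < 1` makes the iteration constant of the quasi-variational inequality less than `1`, and the
Lipschitz constant obtained from `vi_stability` is at most `√(κ / (1 - L))`. -/
lemma const_bounds {lK lG ηG : ℝ} (hlK : 0 ≤ lK) (hlG : 0 < lG) (hηG : 0 < ηG)
    (hL : Lconst lK lG ηG < 1) :
    lK * (1 + lG / ηG) < 1 ∧
    lG / ηG / (1 - lK * (1 + lG / ηG)) ≤
      Real.sqrt (kconst lG ηG / (1 - Lconst lK lG ηG)) := by
  set R := Real.sqrt (lG ^ 2 + ηG ^ 2 / 2) with hR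
  have hR2 : R ^ 2 = lG ^ 2 + ηG ^ 2 / 2 := Real.sq_sqrt (by positivity)
  have hRpos : 0 < R := Real.sqrt_pos.2 (by positivity)
  have hs : Real.sqrt (4 * lG ^ 2 + 2 * ηG ^ 2) = 2 * R := by
    rw [show 4 * lG ^ 2 + 2 * ηG ^ 2 = (2 * R) ^ 2 by rw [mul_pow, hR2]; ring]
    exact Real.sqrt_sq (by positivity)
  have hLe : Lconst lK lG ηG = 4 * R * (lG + R) * (lK / ηG) ^ 2 := by
    rw [Lconst, hs]
    rw [add_assoc, show 2 * lG ^ 2 + ηG ^ 2 = 2 * R ^ 2 by rw [hR2]; ring]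
    field_simp; ring
  have hke : kconst lG ηG = 2 * lG * (R + lG) ^ 2 / (ηG ^ 2 * R) := rfl
  set L := Lconst lK lG ηG
  set b := lK * (1 + lG / ηG) with hb
  have hb0 : 0 ≤ b := by positivity
  have hbe : b = (ηG + lG) * (lK / ηG) := by rw [hb]; field_simp
  have h4 : (ηG + lG) ^ 2 ≤ 4 * R ^ 2 := by rw [hR2]; nlinarith [sq_nonneg (ηG - lG), sq_nonneg lG]
  have hb2 : R * L ≥ (lG + R) * b ^ 2 := by
    rw [hLe, hbe, mul_pow]
    have := mul_le_mul_of_nonneg_right h4 (show 0 ≤ (lG + R) * (lK / ηG) ^ 2 by positivity)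
    nlinarith
  have hb1 : b < 1 := by
    by_contra! h
    have : 1 ≤ b ^ 2 := one_le_pow₀ h
    nlinarith
  refine ⟨hb1, Real.le_sqrt_of_sq_le ?_⟩
  rw [hke, div_div, div_pow, mul_pow, div_div, div_le_div_iff₀ (by nlinarith [pow_pos hηG 2, pow_pos (sub_pos.2 hb1) 2]) (by
    have := sub_pos.2 hL; positivity)]
  have hmain : lG * R * (1 - L) ≤ 2 * (R + lG) ^ 2 * (1 - b) ^ 2 := by
    -- The difference is a quadratic in `b`; complete the square.
    have e1 : lG * R - lG * (lG + R) * b ^ 2 ≤ 2 * (R + lG) ^ 2 * (1 - b) ^ 2 := by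
      have hq := sq_nonneg ((2 * (R + lG) + lG) * b - 2 * (R + lG))
      have hpos : 0 < 2 * (R + lG) + lG := by positivity
      have : (2 * (R + lG) + lG) * (2 * (R + lG) ^ 2 * (1 - b) ^ 2 - (lG * R - lG * (lG + R) * b ^ 2))
          = (R + lG) * ((2 * (R + lG) + lG) * b - 2 * (R + lG)) ^ 2 + lG * (R * lG + 2 * lG ^ 2) := by
        ring
      have h0 : 0 ≤ 2 * (R + lG) ^ 2 * (1 - b) ^ 2 - (lG * R - lG * (lG + R) * b ^ 2) := by
        refine nonneg_of_mul_nonneg_right ?_ hpos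
        rw [this]; positivity
      linarith
    nlinarith [mul_le_mul_of_nonneg_left hb2 hlG.le]
  calc lG ^ 2 * (ηG ^ 2 * R * (1 - L)) = (lG * R * (1 - L)) * (lG * ηG ^ 2) := by ring
    _ ≤ (2 * (R + lG) ^ 2 * (1 - b) ^ 2) * (lG * ηG ^ 2) := by gcongr
    _ = _ := by ring

/-! ### The quasi-variational inequality -/

/-- Solution operator `U` of the quasi-variational inequality with frozen time and state, together
with uniqueness and Lipschitz dependence on the data. The inner variational inequality over `K z`
defines a contraction in `z`, whose fixed point is the solution. -/
lemma qvi_solution_map {H₁ H₂ : Type*} [NormedAddCommGroup H₁]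
    [NormedAddCommGroup H₂] [InnerProductSpace ℝ H₂] [CompleteSpace H₂] (T : ℝ)
    (Ω : Set H₂) (hΩne : Ω.Nonempty) (hΩcl : IsClosed Ω) (K : H₂ → Set H₂)
    (hK : ∀ u ∈ Ω, (K u).Nonempty ∧ IsClosed (K u) ∧ Convex ℝ (K u) ∧ K u ⊆ Ω)
    (G : ℝ → H₁ → H₂ → H₂) (lG ηG : ℝ) (hlG : 0 < lG) (hηG : 0 < ηG)
    (hGLip : ∀ s₁ ∈ Icc (0:ℝ) T, ∀ s₂ ∈ Icc (0:ℝ) T, ∀ (x₁ x₂ : H₁), ∀ u₁ ∈ Ω, ∀ u₂ ∈ Ω,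
      ‖G s₂ x₂ u₂ - G s₁ x₁ u₁‖ ≤ lG * (|s₂ - s₁| + ‖x₂ - x₁‖ + ‖u₂ - u₁‖))
    (hGpm : ∀ s ∈ Icc (0:ℝ) T, ∀ (x : H₁), ∀ u ∈ Ω, ∀ u₁ ∈ K u, ∀ u₂ ∈ K u,
      0 ≤ ⟪G s x u₂, u₁ - u₂⟫ → ηG * ‖u₁ - u₂‖ ^ 2 ≤ ⟪G s x u₁, u₁ - u₂⟫)
    (lK : ℝ) (hlK : 0 ≤ lK)
    (hKproj : ∀ u₁ ∈ Ω, ∀ u₂ ∈ Ω, ∀ ϖ : H₂,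
      ‖proj (K u₂) ϖ - proj (K u₁) ϖ‖ ≤ lK * ‖u₂ - u₁‖)
    (hθ : lK * (1 + lG / ηG) < 1) :
    ∃ U : ℝ → H₁ → H₂,
      (∀ s ∈ Icc (0:ℝ) T, ∀ x, U s x ∈ Ω ∧ U s x ∈ K (U s x) ∧
        ∀ v ∈ K (U s x), 0 ≤ ⟪G s x (U s x), v - U s x⟫) ∧
      (∀ s ∈ Icc (0:ℝ) T, ∀ x, ∀ u ∈ Ω, u ∈ K u → (∀ v ∈ K u, 0 ≤ ⟪G s x u, v - u⟫) →
        u = U s x) ∧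
      (∀ s₁ ∈ Icc (0:ℝ) T, ∀ s₂ ∈ Icc (0:ℝ) T, ∀ x₁ x₂ : H₁,
        ‖U s₂ x₂ - U s₁ x₁‖ ≤
          lG / ηG / (1 - lK * (1 + lG / ηG)) * (|s₂ - s₁| + ‖x₂ - x₁‖)) := by
  classical
  set θ := lK * (1 + lG / ηG) with hθdef
  have hθ0 : 0 ≤ θ := by positivity
  have hcmp : ∀ s₁ ∈ Icc (0:ℝ) T, ∀ s₂ ∈ Icc (0:ℝ) T, ∀ x₁ x₂ : H₁, ∀ z₁ ∈ Ω, ∀ z₂ ∈ Ω,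
      ∀ u₁ ∈ K z₁, ∀ u₂ ∈ K z₂, (∀ v ∈ K z₁, 0 ≤ ⟪G s₁ x₁ u₁, v - u₁⟫) →
      (∀ v ∈ K z₂, 0 ≤ ⟪G s₂ x₂ u₂, v - u₂⟫) →
      ‖u₂ - u₁‖ ≤ θ * ‖z₂ - z₁‖ + lG / ηG * (|s₂ - s₁| + ‖x₂ - x₁‖) := by
    intro s₁ hs₁ s₂ hs₂ x₁ x₂ z₁ hz₁ z₂ hz₂ u₁ hu₁ u₂ hu₂ h₁ h₂
    obtain ⟨-, hc₁, hv₁, hΩ₁⟩ := hK z₁ hz₁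
    obtain ⟨-, hc₂, hv₂, hΩ₂⟩ := hK z₂ hz₂
    have := vi_stability hc₁ hv₁ hc₂ hv₂ (G s₁ x₁) (G s₂ x₂) lG ηG (lK * ‖z₂ - z₁‖)
      (|s₂ - s₁| + ‖x₂ - x₁‖) hlG.le hηG (hKproj z₁ hz₁ z₂ hz₂) hu₁ hu₂
      (fun w hw => hGLip s₁ hs₁ s₂ hs₂ x₁ x₂ u₁ (hΩ₁ hu₁) w (hΩ₂ hw))
      (fun w hw => hGpm s₂ hs₂ x₂ z₂ hz₂ w hw u₂ hu₂) h₁ h₂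
    rw [hθdef]
    linarith
  have hex : ∀ s ∈ Icc (0:ℝ) T, ∀ x : H₁, ∃ u, u ∈ Ω ∧ u ∈ K u ∧
      ∀ v ∈ K u, 0 ≤ ⟪G s x u, v - u⟫ := by
    intro s hs x
    have hVI : ∀ z : Ω, ∃ u ∈ K z, ∀ v ∈ K z, 0 ≤ ⟪G s x u, v - u⟫ := fun z => by
      obtain ⟨hne, hc, hv, hΩ⟩ := hK z z.2
      refine vi_exists hne hc hv (G s x) lG ηG hηG (fun u₁ hu₁ u₂ hu₂ => ?_)
        (hGpm s hs x z z.2)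
      simpa using hGLip s hs s hs x x u₁ (hΩ hu₁) u₂ (hΩ hu₂)
    choose S hSK hSv using hVI
    let Φ : Ω → Ω := fun z => ⟨S z, (hK z z.2).2.2.2 (hSK z)⟩
    have hΦ : ContractingWith ⟨θ, hθ0⟩ Φ := by
      refine ⟨by exact_mod_cast hθ, LipschitzWith.of_dist_le_mul fun z₂ z₁ => ?_⟩
      have := hcmp s hs s hs x x z₁ z₁.2 z₂ z₂.2 _ (hSK z₁) _ (hSK z₂) (hSv z₁) (hSv z₂)
      simp only [sub_self, abs_zero, norm_zero, add_zero, mul_zero] at this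
      rw [Subtype.dist_eq, Subtype.dist_eq, dist_eq_norm, dist_eq_norm]
      exact this
    have : CompleteSpace Ω := hΩcl.completeSpace_coe
    have : Nonempty Ω := hΩne.to_subtype
    have hfix := hΦ.fixedPoint_isFixedPt
    set z := ContractingWith.fixedPoint Φ hΦ
    have hz : S z = z := congrArg Subtype.val hfix
    have h1 := hSK z
    have h2 := hSv z
    rw [hz] at h1 h2
    exact ⟨z, z.2, h1, h2⟩
  choose! U hU using hex
  refine ⟨U, hU, fun s hs x u huΩ huK huv => ?_, fun s₁ hs₁ s₂ hs₂ x₁ x₂ => ?_⟩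
  · obtain ⟨h1, h2, h3⟩ := hU s hs x
    have := hcmp s hs s hs x x _ h1 u huΩ _ h2 u huK h3 huv
    simp only [sub_self, abs_zero, norm_zero, add_zero, mul_zero] at this
    have h0 := norm_nonneg (u - U s x)
    exact sub_eq_zero.1 (norm_eq_zero.1 (by nlinarith))
  · obtain ⟨a1, a2, a3⟩ := hU s₁ hs₁ x₁
    obtain ⟨b1, b2, b3⟩ := hU s₂ hs₂ x₂
    have := hcmp s₁ hs₁ s₂ hs₂ x₁ x₂ _ a1 _ b1 _ a2 _ b2 a3 b3
    rw [div_mul_eq_mul_div, le_div_iff₀ (by linarith)]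
    linarith

/-! ### The Volterra equation -/

lemma kernel_intervalIntegrable {q : ℝ} (hq : 0 < q) (s : ℝ) :
    IntervalIntegrable (fun ζ => (s - ζ) ^ (q - 1)) MeasureTheory.volume 0 s := by
  have := (intervalIntegral.intervalIntegrable_rpow' (a := 0) (b := s)
    (show -1 < q - 1 by linarith)).comp_sub_left s
  simpa using this.symm

/-- The Riemann–Liouville integral of a continuous function is continuous up to `s = 0`: rescaling
to `[0,1]` turns it into `s ^ q • ∫ τ in 0..1, (1 - τ) ^ (q - 1) • h (s τ)`. -/
lemma fractional_integral_continuousOn {E : Type*} [NormedAddCommGroup E] [NormedSpace ℝ E]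
    {T q : ℝ} (hT : 0 < T) (hq : 0 < q) (h : ℝ → E) (hh : ContinuousOn h (Icc 0 T)) :
    ContinuousOn (fun s => ∫ ζ in (0:ℝ)..s, (s - ζ) ^ (q - 1) • h ζ) (Icc 0 T) := by
  obtain ⟨M, hM⟩ := isCompact_Icc.exists_bound_of_continuousOn hh
  let k : ℝ → E := fun t => h (projIcc 0 T hT.le t)
  have hk : Continuous k := hh.comp_continuous (by fun_prop) fun t => (projIcc 0 T hT.le t).2
  have hkM : ∀ t, ‖k t‖ ≤ M := fun t => hM _ (projIcc 0 T hT.le t).2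
  have hint := kernel_intervalIntegrable hq 1
  have hc : Continuous fun s : ℝ => ∫ τ in (0:ℝ)..1, (1 - τ) ^ (q - 1) • k (s * τ) := by
    refine intervalIntegral.continuous_of_dominated_interval
      (bound := fun τ => (1 - τ) ^ (q - 1) * M) (fun s => ?_) (fun s => ?_)
      (hint.mul_const M) ?_
    · have := hint.smul_continuousOn (g := fun τ => k (s * τ))
        (Continuous.continuousOn (by fun_prop))
      rw [Set.uIoc_of_le zero_le_one]
      exact ((intervalIntegrable_iff_integrableOn_Ioc_of_le zero_le_one).1 this).1
    · refine Filter.Eventually.of_forall fun τ hτ => ?_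
      rw [Set.uIoc_of_le zero_le_one] at hτ
      have h0 : (0:ℝ) ≤ (1 - τ) ^ (q - 1) := Real.rpow_nonneg (by linarith [hτ.2]) _
      rw [norm_smul, Real.norm_eq_abs, abs_of_nonneg h0]
      exact mul_le_mul_of_nonneg_left (hkM _) h0
    · exact Filter.Eventually.of_forall fun τ _ => by fun_prop
  have hc2 : Continuous fun s : ℝ => s ^ q • ∫ τ in (0:ℝ)..1, (1 - τ) ^ (q - 1) • k (s * τ) :=
    (Real.continuous_rpow_const hq.le).smul hc
  refine hc2.continuousOn.congr fun s hs => ?_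
  have e1 : ∫ ζ in (0:ℝ)..s, (s - ζ) ^ (q - 1) • h ζ
      = ∫ ζ in (0:ℝ)..s, (s - ζ) ^ (q - 1) • k ζ := by
    refine intervalIntegral.integral_congr fun ζ hζ => ?_
    rw [Set.uIcc_of_le hs.1] at hζ
    have : k ζ = h ζ := by
      simp only [k]
      rw [projIcc_of_mem hT.le ⟨hζ.1, hζ.2.trans hs.2⟩]
    simp only [this]
  have e2 := intervalIntegral.smul_integral_comp_mul_left (a := 0) (b := 1)
    (fun ζ => (s - ζ) ^ (q - 1) • k ζ) s
  simp only [mul_zero, mul_one] at e2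
  simp only [e1]
  rw [← e2]
  have e3 : ∫ τ in (0:ℝ)..1, (s - s * τ) ^ (q - 1) • k (s * τ)
      = s ^ (q - 1) • ∫ τ in (0:ℝ)..1, (1 - τ) ^ (q - 1) • k (s * τ) := by
    rw [← intervalIntegral.integral_smul]
    refine intervalIntegral.integral_congr fun τ hτ => ?_
    rw [Set.uIcc_of_le zero_le_one] at hτ
    simp only [smul_smul]
    rw [show s - s * τ = s * (1 - τ) by ring, Real.mul_rpow hs.1 (by linarith [hτ.2])]
  rw [e3, smul_smul]
  congr 1
  rcases hs.1.eq_or_lt with h0 | h0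
  · rw [← h0, zero_mul, Real.zero_rpow hq.ne']
  · rw [Real.rpow_sub_one h0.ne']; field_simp

/-- Unique solvability of the nonlocal Volterra equation with kernel `(s - ζ) ^ (q - 1)`. The
right-hand side contracts the weighted norm `sup e ^ (-γ s) ‖x s‖`; substituting
`x s = e ^ (γ s) • y s` reduces existence to Banach's theorem for the plain sup norm. -/
lemma volterra_unique {E : Type*} [NormedAddCommGroup E] [NormedSpace ℝ E] [CompleteSpace E]
    {T q : ℝ} (hT : 0 < T) (hq : 0 < q) (x₀ : E) (N : ℝ → E → E) (l : ℝ) (hl : 0 ≤ l)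
    (hNc : ∀ x : ℝ → E, ContinuousOn x (Icc 0 T) → ContinuousOn (fun s => N s (x s)) (Icc 0 T))
    (hN : ∀ s ∈ Icc (0:ℝ) T, ∀ x₁ x₂, ‖N s x₂ - N s x₁‖ ≤ l * ‖x₂ - x₁‖)
    (ψ : (ℝ → E) → E) (γ lψ : ℝ) (hγ : 0 < γ) (hlψ : 0 ≤ lψ)
    (hψ : ∀ y₁ y₂ : ℝ → E, ContinuousOn y₁ (Icc 0 T) → ContinuousOn y₂ (Icc 0 T) →
      ‖ψ y₂ - ψ y₁‖ ≤ lψ * sSup ((fun s => Real.exp (-(γ * s)) * ‖y₂ s - y₁ s‖) '' Icc 0 T))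
    (hsmall : lψ + l / Real.Gamma q *
      sSup ((fun s => ∫ ζ in (0:ℝ)..s, (s - ζ) ^ (q - 1) * Real.exp (-(γ * (s - ζ)))) ''
        Icc (0:ℝ) T) < 1) :
    ∃ x : ℝ → E, (ContinuousOn x (Icc 0 T) ∧ ∀ s ∈ Icc (0:ℝ) T,
        x s = x₀ + ψ x + (Real.Gamma q)⁻¹ • ∫ ζ in (0:ℝ)..s, (s - ζ) ^ (q - 1) • N ζ (x ζ)) ∧
      ∀ x' : ℝ → E, ContinuousOn x' (Icc 0 T) → (∀ s ∈ Icc (0:ℝ) T,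
        x' s = x₀ + ψ x' + (Real.Gamma q)⁻¹ • ∫ ζ in (0:ℝ)..s, (s - ζ) ^ (q - 1) • N ζ (x' ζ)) →
        ∀ s ∈ Icc (0:ℝ) T, x' s = x s := by
  have hΓ : 0 < Real.Gamma q := Real.Gamma_pos_of_pos hq
  let Φ : (ℝ → E) → ℝ → E := fun x s =>
    x₀ + ψ x + (Real.Gamma q)⁻¹ • ∫ ζ in (0:ℝ)..s, (s - ζ) ^ (q - 1) • N ζ (x ζ)
  let W : (ℝ → E) → (ℝ → E) → ℝ := fun x y =>
    sSup ((fun s => Real.exp (-(γ * s)) * ‖y s - x s‖) '' Icc 0 T)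
  let J : ℝ → ℝ := fun s => ∫ ζ in (0:ℝ)..s, (s - ζ) ^ (q - 1) * Real.exp (-(γ * (s - ζ)))
  set A := sSup (J '' Icc (0:ℝ) T) with hA
  set θ := lψ + l / Real.Gamma q * A with hθ
  have hJint : ∀ s, IntervalIntegrable
      (fun ζ => (s - ζ) ^ (q - 1) * Real.exp (-(γ * (s - ζ)))) MeasureTheory.volume 0 s :=
    fun s => (kernel_intervalIntegrable hq s).mul_continuousOn
      (Continuous.continuousOn (by fun_prop))
  have hJ0 : ∀ s ∈ Icc (0:ℝ) T, 0 ≤ J s := fun s hs =>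
    intervalIntegral.integral_nonneg hs.1 fun ζ hζ =>
      mul_nonneg (Real.rpow_nonneg (by linarith [hζ.2]) _) (Real.exp_pos _).le
  have hJbdd : BddAbove (J '' Icc (0:ℝ) T) := by
    -- `J s` is `e ^ (-γ s)` times a fractional integral of `e ^ (γ ζ)`, hence continuous.
    have hc : ContinuousOn J (Icc 0 T) := by
      have h1 := fractional_integral_continuousOn hT hq (fun ζ => Real.exp (γ * ζ))
        (Continuous.continuousOn (by fun_prop))
      have h2 : ContinuousOn (fun s : ℝ => Real.exp (-(γ * s))) (Icc 0 T) :=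
        Continuous.continuousOn (by fun_prop)
      refine (h2.mul h1).congr fun s _ => ?_
      simp only [J, smul_eq_mul, Pi.mul_apply]
      rw [← intervalIntegral.integral_const_mul]
      refine intervalIntegral.integral_congr fun ζ _ => ?_
      rw [show -(γ * (s - ζ)) = -(γ * s) + γ * ζ by ring, Real.exp_add]
      ring
    exact isCompact_Icc.bddAbove_image hc
  have hJA : ∀ s ∈ Icc (0:ℝ) T, J s ≤ A := fun s hs => le_csSup hJbdd ⟨s, hs, rfl⟩
  have h0T : (0:ℝ) ∈ Icc (0:ℝ) T := ⟨le_rfl, hT.le⟩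
  have hA0 : 0 ≤ A := (hJ0 0 h0T).trans (hJA 0 h0T)
  have hθ0 : 0 ≤ θ := by positivity
  have hWle : ∀ x y : ℝ → E, ContinuousOn x (Icc 0 T) → ContinuousOn y (Icc 0 T) →
      ∀ s ∈ Icc (0:ℝ) T, Real.exp (-(γ * s)) * ‖y s - x s‖ ≤ W x y := by
    intro x y hx hy s hs
    refine le_csSup (isCompact_Icc.bddAbove_image ?_) ⟨s, hs, rfl⟩
    exact (Continuous.continuousOn (by fun_prop)).mul (hy.sub hx).norm
  have hW0 : ∀ x y : ℝ → E, ContinuousOn x (Icc 0 T) → ContinuousOn y (Icc 0 T) → 0 ≤ W x y :=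
    fun x y hx hy => le_trans (by positivity) (hWle x y hx hy 0 h0T)
  have hint : ∀ x : ℝ → E, ContinuousOn x (Icc 0 T) → ∀ s ∈ Icc (0:ℝ) T,
      IntervalIntegrable (fun ζ => (s - ζ) ^ (q - 1) • N ζ (x ζ)) MeasureTheory.volume 0 s := by
    intro x hx s hs
    refine (kernel_intervalIntegrable hq s).smul_continuousOn ((hNc x hx).mono ?_)
    rw [Set.uIcc_of_le hs.1]
    exact Icc_subset_Icc_right hs.2
  have hcontr : ∀ x y : ℝ → E, ContinuousOn x (Icc 0 T) → ContinuousOn y (Icc 0 T) →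
      ∀ s ∈ Icc (0:ℝ) T, Real.exp (-(γ * s)) * ‖Φ y s - Φ x s‖ ≤ θ * W x y := by
    intro x y hx hy s hs
    have hW := hW0 x y hx hy
    have e : Φ y s - Φ x s = (ψ y - ψ x) + (Real.Gamma q)⁻¹ •
        ∫ ζ in (0:ℝ)..s, ((s - ζ) ^ (q - 1) • N ζ (y ζ) - (s - ζ) ^ (q - 1) • N ζ (x ζ)) := by
      rw [intervalIntegral.integral_sub (hint y hy s hs) (hint x hx s hs), smul_sub]
      simp only [Φ]
      abel
    have hI : ‖∫ ζ in (0:ℝ)..s, ((s - ζ) ^ (q - 1) • N ζ (y ζ) - (s - ζ) ^ (q - 1) • N ζ (x ζ))‖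
        ≤ ∫ ζ in (0:ℝ)..s, (Real.exp (γ * s) * (l * W x y)) *
          ((s - ζ) ^ (q - 1) * Real.exp (-(γ * (s - ζ)))) := by
      refine intervalIntegral.norm_integral_le_of_norm_le hs.1
        (Filter.Eventually.of_forall fun ζ hζ => ?_) ((hJint s).const_mul _)
      have hζI : ζ ∈ Icc (0:ℝ) T := ⟨hζ.1.le, hζ.2.trans hs.2⟩
      have hk0 : 0 ≤ (s - ζ) ^ (q - 1) := Real.rpow_nonneg (by linarith [hζ.2]) _
      have hd : ‖y ζ - x ζ‖ ≤ Real.exp (γ * ζ) * W x y := by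
        have := mul_le_mul_of_nonneg_left (hWle x y hx hy ζ hζI) (Real.exp_pos (γ * ζ)).le
        rwa [← mul_assoc, ← Real.exp_add, add_neg_cancel, Real.exp_zero, one_mul] at this
      rw [← smul_sub, norm_smul, Real.norm_eq_abs, abs_of_nonneg hk0]
      calc (s - ζ) ^ (q - 1) * ‖N ζ (y ζ) - N ζ (x ζ)‖
          ≤ (s - ζ) ^ (q - 1) * (l * (Real.exp (γ * ζ) * W x y)) := by
            refine mul_le_mul_of_nonneg_left ((hN ζ hζI _ _).trans ?_) hk0
            exact mul_le_mul_of_nonneg_left hd hl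
        _ = _ := by
            rw [show γ * ζ = γ * s + -(γ * (s - ζ)) by ring, Real.exp_add]
            ring
    rw [intervalIntegral.integral_const_mul] at hI
    have hI2 : Real.exp (-(γ * s)) * ‖∫ ζ in (0:ℝ)..s,
        ((s - ζ) ^ (q - 1) • N ζ (y ζ) - (s - ζ) ^ (q - 1) • N ζ (x ζ))‖ ≤ l * W x y * A := by
      have h1 := mul_le_mul_of_nonneg_left hI (Real.exp_pos (-(γ * s))).le
      refine h1.trans ?_
      rw [← mul_assoc, ← mul_assoc, ← Real.exp_add, neg_add_cancel, Real.exp_zero, one_mul]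
      exact mul_le_mul_of_nonneg_left (hJA s hs) (by positivity)
    have hψ2 : Real.exp (-(γ * s)) * ‖ψ y - ψ x‖ ≤ lψ * W x y := by
      have h1 : Real.exp (-(γ * s)) ≤ 1 :=
        Real.exp_le_one_iff.2 (neg_nonpos.2 (mul_nonneg hγ.le hs.1))
      exact (mul_le_of_le_one_left (norm_nonneg _) h1).trans (hψ x y hx hy)
    calc Real.exp (-(γ * s)) * ‖Φ y s - Φ x s‖
        ≤ Real.exp (-(γ * s)) * (‖ψ y - ψ x‖ + (Real.Gamma q)⁻¹ * ‖∫ ζ in (0:ℝ)..s,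
          ((s - ζ) ^ (q - 1) • N ζ (y ζ) - (s - ζ) ^ (q - 1) • N ζ (x ζ))‖) := by
          refine mul_le_mul_of_nonneg_left ?_ (Real.exp_pos _).le
          rw [e]
          refine (norm_add_le _ _).trans_eq ?_
          rw [norm_smul, Real.norm_eq_abs, abs_of_pos (inv_pos.2 hΓ)]
      _ ≤ lψ * W x y + (Real.Gamma q)⁻¹ * (l * W x y * A) := by
          have := mul_le_mul_of_nonneg_left hI2 (inv_pos.2 hΓ).le
          linarith
      _ = θ * W x y := by rw [hθ]; ring
  have hΦc : ∀ x : ℝ → E, ContinuousOn x (Icc 0 T) → ContinuousOn (Φ x) (Icc 0 T) := fun x hx =>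
    continuousOn_const.add
      ((fractional_integral_continuousOn hT hq (fun s => N s (x s)) (hNc x hx)).const_smul _)
  let ext : C(Icc (0:ℝ) T, E) → ℝ → E := fun y s => Real.exp (γ * s) • y (projIcc 0 T hT.le s)
  have hext : ∀ y, ContinuousOn (ext y) (Icc 0 T) := fun y =>
    Continuous.continuousOn (by fun_prop)
  have hextW : ∀ y z, W (ext y) (ext z) ≤ dist z y := by
    intro y z
    refine csSup_le ⟨_, 0, h0T, rfl⟩ ?_
    rintro _ ⟨s, -, rfl⟩
    simp only [ext]
    rw [← smul_sub, norm_smul, Real.norm_eq_abs, abs_of_pos (Real.exp_pos _), ← mul_assoc,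
      ← Real.exp_add, neg_add_cancel, Real.exp_zero, one_mul, ← dist_eq_norm]
    exact ContinuousMap.dist_apply_le_dist _
  let Ψ : C(Icc (0:ℝ) T, E) → C(Icc (0:ℝ) T, E) := fun y =>
    ⟨fun s => Real.exp (-(γ * s)) • Φ (ext y) s,
      Continuous.smul (by fun_prop) (continuousOn_iff_continuous_domRestrict.1 (hΦc _ (hext y)))⟩
  have hΨ : ContractingWith ⟨θ, hθ0⟩ Ψ := by
    refine ⟨by exact_mod_cast hsmall, LipschitzWith.of_dist_le_mul fun z y => ?_⟩
    refine (ContinuousMap.dist_le (by positivity)).2 fun s => ?_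
    simp only [Ψ, ContinuousMap.coe_mk]
    rw [dist_eq_norm, ← smul_sub, norm_smul, Real.norm_eq_abs, abs_of_pos (Real.exp_pos _)]
    exact (hcontr _ _ (hext y) (hext z) s s.2).trans
      (mul_le_mul_of_nonneg_left (hextW y z) hθ0)
  have hfix := hΨ.fixedPoint_isFixedPt
  set y := ContractingWith.fixedPoint Ψ hΨ
  have hsol : ∀ s ∈ Icc (0:ℝ) T, ext y s = Φ (ext y) s := by
    intro s hs
    have h1 : Ψ y ⟨s, hs⟩ = y ⟨s, hs⟩ := by rw [hfix]
    simp only [Ψ, ContinuousMap.coe_mk] at h1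
    have h2 : ext y s = Real.exp (γ * s) • y ⟨s, hs⟩ := by
      simp only [ext]
      rw [projIcc_of_mem hT.le hs]
    rw [h2, ← h1, smul_smul, ← Real.exp_add, add_neg_cancel, Real.exp_zero, one_smul]
  refine ⟨ext y, ⟨hext y, hsol⟩, fun x' hx' hx'sol s hs => ?_⟩
  have hWθ : W (ext y) x' ≤ θ * W (ext y) x' := by
    refine csSup_le ⟨_, 0, h0T, rfl⟩ ?_
    rintro _ ⟨t, ht, rfl⟩
    have h := hcontr _ _ (hext y) hx' t ht
    rw [← hsol t ht, show Φ x' t = x' t from (hx'sol t ht).symm] at h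
    exact h
  have hW00 := hW0 _ _ (hext y) hx'
  have hWz : W (ext y) x' = 0 := by nlinarith
  have h := hWle _ _ (hext y) hx' s hs
  rw [hWz] at h
  have h3 : ‖x' s - ext y s‖ ≤ 0 := nonpos_of_mul_nonpos_right h (Real.exp_pos _)
  exact sub_eq_zero.1 (norm_le_zero_iff.1 h3)

/-- Theorem 3.1: unique solvability of the NFDQVI under (H₁)–(H₄), (H₅') and `L < 1`. -/
theorem nfdqvi_unique_solution
    {H₁ H₂ : Type*} [NormedAddCommGroup H₁] [InnerProductSpace ℝ H₁] [CompleteSpace H₁]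
    [NormedAddCommGroup H₂] [InnerProductSpace ℝ H₂] [CompleteSpace H₂]
    (T : ℝ) (hT : 0 < T) (q : ℝ) (hq : q ∈ Ioc (0:ℝ) 1) (x₀ : H₁)
    (Ω : Set H₂) (hΩne : Ω.Nonempty) (hΩcl : IsClosed Ω) (hΩcv : Convex ℝ Ω)
    (K : H₂ → Set H₂)
    (hK : ∀ u ∈ Ω, (K u).Nonempty ∧ IsClosed (K u) ∧ Convex ℝ (K u) ∧ K u ⊆ Ω)
    (G : ℝ → H₁ → H₂ → H₂) (lG ηG : ℝ) (hlG : 0 < lG) (hηG : 0 < ηG)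
    -- (H₁)
    (hGLip : ∀ s₁ ∈ Icc (0:ℝ) T, ∀ s₂ ∈ Icc (0:ℝ) T, ∀ (x₁ x₂ : H₁), ∀ u₁ ∈ Ω, ∀ u₂ ∈ Ω,
      ‖G s₂ x₂ u₂ - G s₁ x₁ u₁‖ ≤ lG * (|s₂ - s₁| + ‖x₂ - x₁‖ + ‖u₂ - u₁‖))
    (hGpm : ∀ s ∈ Icc (0:ℝ) T, ∀ (x : H₁), ∀ u ∈ Ω, ∀ u₁ ∈ K u, ∀ u₂ ∈ K u,
      0 ≤ ⟪G s x u₂, u₁ - u₂⟫ → ηG * ‖u₁ - u₂‖ ^ 2 ≤ ⟪G s x u₁, u₁ - u₂⟫)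
    -- (H₂)
    (lK : ℝ) (hlK : 0 ≤ lK)
    (hKproj : ∀ u₁ ∈ Ω, ∀ u₂ ∈ Ω, ∀ ϖ : H₂,
      ‖proj (K u₂) ϖ - proj (K u₁) ϖ‖ ≤ lK * ‖u₂ - u₁‖)
    -- (H₃)
    (g : ℝ → H₁ → H₂ → H₁) (lg : ℝ) (hlg : 0 < lg)
    (hgc : ContinuousOn (fun p : ℝ × H₁ × H₂ => g p.1 p.2.1 p.2.2)
      (Icc (0:ℝ) T ×ˢ (univ : Set (H₁ × H₂))))
    (hgLip : ∀ s ∈ Icc (0:ℝ) T, ∀ (x₁ x₂ : H₁) (u₁ u₂ : H₂),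
      ‖g s x₂ u₂ - g s x₁ u₁‖ ≤ lg * (‖x₂ - x₁‖ + ‖u₂ - u₁‖))
    -- (H₄)
    (f : ℝ → H₁ → H₁) (lf : ℝ) (hlf : 0 < lf)
    (hfc : ContinuousOn (fun p : ℝ × H₁ => f p.1 p.2) (Icc (0:ℝ) T ×ˢ (univ : Set H₁)))
    (hfLip : ∀ s ∈ Icc (0:ℝ) T, ∀ x₁ x₂ : H₁, ‖f s x₂ - f s x₁‖ ≤ lf * ‖x₂ - x₁‖)
    -- (H₅')
    (ψ : (ℝ → H₁) → H₁) (γ lψ : ℝ) (hγ : 0 < γ) (hlψ0 : 0 < lψ) (hlψ1 : lψ < 1)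
    (hψLip : ∀ y₁ y₂ : ℝ → H₁, ContinuousOn y₁ (Icc 0 T) → ContinuousOn y₂ (Icc 0 T) →
      ‖ψ y₂ - ψ y₁‖ ≤ lψ * sSup ((fun s => Real.exp (-(γ * s)) * ‖y₂ s - y₁ s‖) '' Icc 0 T))
    (hsmall : lψ + (lf + xiconst lg lK lG ηG) / Real.Gamma q *
      sSup ((fun s => ∫ ζ in (0:ℝ)..s, (s - ζ) ^ (q - 1) * Real.exp (-(γ * (s - ζ)))) ''
        Icc (0:ℝ) T) < 1)
    -- L < 1
    (hL : Lconst lK lG ηG < 1) :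
    ∃ (x : ℝ → H₁) (u : ℝ → H₂),
      IsNFDQVISol T q x₀ ψ f g G Ω K x u ∧
      ∀ (x' : ℝ → H₁) (u' : ℝ → H₂), IsNFDQVISol T q x₀ ψ f g G Ω K x' u' →
        ∀ s ∈ Icc (0:ℝ) T, x' s = x s ∧ u' s = u s := by
  obtain ⟨hθ, hc⟩ := const_bounds hlK hlG hηG hL
  obtain ⟨U, hU, hUuniq, hULip⟩ := qvi_solution_map T Ω hΩne hΩcl K hK G lG ηG hlG hηG hGLip hGpm
    lK hlK hKproj hθ
  have hULip' : ∀ s₁ ∈ Icc (0:ℝ) T, ∀ s₂ ∈ Icc (0:ℝ) T, ∀ x₁ x₂ : H₁, ‖U s₂ x₂ - U s₁ x₁‖ ≤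
      Real.sqrt (kconst lG ηG / (1 - Lconst lK lG ηG)) * (|s₂ - s₁| + ‖x₂ - x₁‖) :=
    fun s₁ hs₁ s₂ hs₂ x₁ x₂ => (hULip s₁ hs₁ s₂ hs₂ x₁ x₂).trans
      (mul_le_mul_of_nonneg_right hc (by positivity))
  set c := Real.sqrt (kconst lG ηG / (1 - Lconst lK lG ηG)) with hcdef
  have hc0 : 0 ≤ c := Real.sqrt_nonneg _
  have hUc : ∀ x : ℝ → H₁, ContinuousOn x (Icc 0 T) →
      ContinuousOn (fun s => U s (x s)) (Icc 0 T) := by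
    intro x hx s hs
    rw [ContinuousWithinAt, tendsto_iff_norm_sub_tendsto_zero]
    have h1 : Filter.Tendsto (fun t => c * (|t - s| + ‖x t - x s‖)) (nhdsWithin s (Icc 0 T))
        (nhds (c * (|s - s| + ‖x s - x s‖))) := by
      have h2 : ContinuousWithinAt (fun t => c * (|t - s| + ‖x t - x s‖)) (Icc 0 T) s :=
        continuousWithinAt_const.mul
          ((Continuous.continuousWithinAt (by fun_prop)).add
            ((hx s hs).sub continuousWithinAt_const).norm)
      exact h2
    simp only [sub_self, abs_zero, norm_zero, add_zero, mul_zero] at h1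
    refine squeeze_zero' (Filter.Eventually.of_forall fun _ => norm_nonneg _) ?_ h1
    filter_upwards [self_mem_nhdsWithin] with t ht
    exact hULip' s hs t ht _ _
  have hxi : xiconst lg lK lG ηG = lg * (1 + c) := rfl
  rw [hxi] at hsmall
  obtain ⟨x, ⟨hxc, hxs⟩, hxu⟩ := volterra_unique hT hq.1 x₀
    (fun s x => f s x + g s x (U s x)) (lf + lg * (1 + c)) (by positivity)
    (fun x hx => by
      have h1 : ContinuousOn (fun s => f s (x s)) (Icc 0 T) :=
        hfc.comp (continuousOn_id.prodMk hx) fun s hs => ⟨hs, mem_univ _⟩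
      have h2 : ContinuousOn (fun s => g s (x s) (U s (x s))) (Icc 0 T) :=
        hgc.comp (continuousOn_id.prodMk (hx.prodMk (hUc x hx))) fun s hs => ⟨hs, mem_univ _⟩
      exact h1.add h2)
    (fun s hs x₁ x₂ => by
      have h1 := hfLip s hs x₁ x₂
      have h2 := hgLip s hs x₁ x₂ (U s x₁) (U s x₂)
      have h3 := hULip' s hs s hs x₁ x₂
      rw [sub_self, abs_zero, zero_add] at h3
      have h4 := mul_le_mul_of_nonneg_left h3 hlg.le
      rw [add_sub_add_comm]
      refine (norm_add_le _ _).trans ?_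
      linarith)
    ψ γ lψ hγ hlψ0.le hψLip hsmall
  refine ⟨x, fun s => U s (x s), ⟨hxc, hUc x hxc, fun s hs => (hU s hs _).1, hxs,
    fun s hs => (hU s hs _).2⟩, ?_⟩
  rintro x' u' ⟨hx'c, -, hu'Ω, hx's, hu'K⟩
  have hu' : ∀ s ∈ Icc (0:ℝ) T, u' s = U s (x' s) := fun s hs =>
    hUuniq s hs _ _ (hu'Ω s hs) (hu'K s hs).1 (hu'K s hs).2
  have hx' := hxu x' hx'c fun s hs => by
    rw [hx's s hs]
    congr 2
    refine intervalIntegral.integral_congr fun ζ hζ => ?_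
    rw [Set.uIcc_of_le hs.1] at hζ
    simp only [hu' ζ ⟨hζ.1, hζ.2.trans hs.2⟩]
  exact fun s hs => ⟨hx' s hs, by rw [hu' s hs, hx' s hs]⟩
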